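/- Let G be a connected graph of bounded degree d on n vertices. Then there exists a connected graph Ĝ on O(n²) vertices, containing G as an induced subgraph, such that Ĝ has a cycle basis in which every cycle has length at most 4 and every edge of Ĝ belongs to at most 4 cycles of the basis. -/

import Mathlib

/-- `x : Sym2 V → ZMod 2` is the edge-indicator vector of a cycle of `G`. -/
def IsCycleVec {V : Type*} [DecidableEq V] (G : SimpleGraph V) (x : Sym2 V → ZMod 2) : Prop :=
  ∃ (v : V) (w : G.Walk v v), w.IsCycle ∧ ∀ e, x e = if e ∈ w.edges then 1 else 0

/-- The cycle space of `G` over GF(2): the span of the indicator vectors of cycles. -/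
noncomputable def cycleSpace {V : Type*} [DecidableEq V] (G : SimpleGraph V) :
    Submodule (ZMod 2) (Sym2 V → ZMod 2) :=
  Submodule.span (ZMod 2) {x | IsCycleVec G x}

/-!
Cone off `G` from a new apex. The triangles spanned by the apex and the edges of `G` form a basis
of the cycle space of the cone, but the edge from the apex to a vertex `v` lies on `deg v` of
them. Adding consecutive triangles around `v` cancels that edge, leaving squares, at the price of
having to assign each triangle to just one end of its edge. So first attach a further triangle to
every edge `uv` of `G`, with new vertex `m`, and then cone off: modulo the attached triangle
`uvm`, the triangle over `uv` is the sum of those over `um` and `vm`, which are assigned to `u`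
and `v`. List the triangles at each vertex of `G` in some order and replace each by its sum with
the previous one. This is a unitriangular change of basis, after which the edge from the apex to
`v` lies on a single cycle, the edge from the apex to `m` on at most four, and every other edge on
at most three.
-/

open Finset

section PreviousInFiber

variable {α β M κ : Type*} [Fintype α] [LinearOrder α] [DecidableEq β]

/-- The largest element below `a` in the fiber of `f` through `a`, or `⊥` if `a` is the least
element of its fiber. -/
def prevInFiber (f : α → β) (a : α) : WithBot α :=
  ({b | f b = f a ∧ b < a} : Finset α).max

lemma prevInFiber_eq_coe {f : α → β} {a b : α} (h : prevInFiber f a = b) : f b = f a ∧ b < a := by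
  simpa using mem_of_max h

lemma coe_le_prevInFiber {f : α → β} {a b : α} (hf : f b = f a) (hba : b < a) :
    b ≤ prevInFiber f a :=
  le_max (by simp [hf, hba])

lemma eq_of_prevInFiber_eq {f : α → β} {a b : α} (hf : f a = f b)
    (h : prevInFiber f a = prevInFiber f b) : a = b := by
  by_contra hne
  wlog hab : a < b generalizing a b
  · exact this hf.symm h.symm (Ne.symm hne) ((not_lt.1 hab).lt_of_ne (Ne.symm hne))
  have hle := coe_le_prevInFiber hf hab
  obtain ⟨c, hc⟩ := WithBot.ne_bot_iff_exists.1 (ne_bot_of_le_ne_bot WithBot.coe_ne_bot hle)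
  rw [← hc, WithBot.coe_le_coe] at hle
  exact (hle.trans_lt (prevInFiber_eq_coe (h.trans hc.symm)).2).false

lemma eq_of_prevInFiber_eq_coe {f : α → β} {a b c : α} (ha : prevInFiber f a = c)
    (hb : prevInFiber f b = c) : a = b :=
  eq_of_prevInFiber_eq ((prevInFiber_eq_coe ha).1.symm.trans (prevInFiber_eq_coe hb).1)
    (ha.trans hb.symm)

/-- The sums of consecutive terms of `t` along the fibers of `f`; the least element of a fiber
contributes its term alone. -/
def consecutiveSum [AddZeroClass M] (f : α → β) (t : α → M) (a : α) : M :=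
  t a + ((prevInFiber f a).map t).unbotD 0

lemma consecutiveSum_of_eq_bot [AddZeroClass M] {f : α → β} {t : α → M} {a : α}
    (h : prevInFiber f a = ⊥) : consecutiveSum f t a = t a := by
  simp [consecutiveSum, h]

lemma consecutiveSum_of_eq_coe [AddZeroClass M] {f : α → β} {t : α → M} {a b : α}
    (h : prevInFiber f a = b) : consecutiveSum f t a = t a + t b := by
  simp [consecutiveSum, h]

lemma mem_span_range_consecutiveSum (R : Type*) [Ring R] [AddCommGroup M] [Module R M]
    (f : α → β) (t : α → M) (a : α) :
    t a ∈ Submodule.span R (Set.range (consecutiveSum f t)) := by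
  induction a using WellFoundedLT.induction with
  | _ a ih =>
    have hsum : consecutiveSum f t a ∈ Submodule.span R (Set.range (consecutiveSum f t)) :=
      Submodule.subset_span ⟨a, rfl⟩
    cases hprev : prevInFiber f a with
    | bot => rwa [consecutiveSum_of_eq_bot hprev] at hsum
    | coe b =>
      rw [consecutiveSum_of_eq_coe hprev] at hsum
      exact (Submodule.add_mem_iff_left _ (ih b (prevInFiber_eq_coe hprev).2)).1 hsum

lemma consecutiveSum_apply_eq_one {f : α → β} {t : α → κ → ZMod 2} {a : α} {k : κ}
    (h : consecutiveSum f t a k = 1) : t a k = 1 ∨ ∃ b : α, prevInFiber f a = b ∧ t b k = 1 := by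
  have add_eq_one : ∀ x y : ZMod 2, x + y = 1 → x = 1 ∨ y = 1 := by decide
  cases hprev : prevInFiber f a with
  | bot => exact .inl (by rwa [consecutiveSum_of_eq_bot hprev] at h)
  | coe b =>
    rw [consecutiveSum_of_eq_coe hprev] at h
    exact (add_eq_one _ _ h).imp_right fun hb => ⟨b, rfl, hb⟩

lemma card_consecutiveSum_apply_eq_one_le (f : α → β) (t : α → κ → ZMod 2) (k : κ) :
    #{a | consecutiveSum f t a k = 1} ≤ 2 * #{a | t a k = 1} := by
  have hsub : ({a | consecutiveSum f t a k = 1} : Finset α) ⊆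
      ({a | t a k = 1} : Finset α) ∪
        ({a | ∃ b : α, prevInFiber f a = b ∧ t b k = 1} : Finset α) := by
    intro a ha
    simpa using consecutiveSum_apply_eq_one (by simpa using ha)
  have hprev : #{a | ∃ b : α, prevInFiber f a = b ∧ t b k = 1} ≤ #{b | t b k = 1} := by
    refine card_le_card_of_forall_subsingleton (fun a (b : α) => prevInFiber f a = b)
      (fun a ha => by simpa [and_comm] using ha) fun b _ a ha a' ha' =>
        eq_of_prevInFiber_eq_coe ha.2 ha'.2
  calc #{a | consecutiveSum f t a k = 1}
      ≤ #{a | t a k = 1} + #{a | ∃ b : α, prevInFiber f a = b ∧ t b k = 1} :=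
        (card_le_card hsub).trans (card_union_le _ _)
    _ ≤ 2 * #{a | t a k = 1} := by omega

/-- Along a fiber on which `t` has coordinate `1`, consecutive terms cancel. -/
lemma card_consecutiveSum_apply_eq_one_le_one {f : α → β} {t : α → κ → ZMod 2} {k : κ} {v : β}
    (ht : ∀ a, t a k = if f a = v then 1 else 0) : #{a | consecutiveSum f t a k = 1} ≤ 1 := by
  have key {a : α} (ha : consecutiveSum f t a k = 1) : f a = v ∧ prevInFiber f a = ⊥ := by
    cases hprev : prevInFiber f a with
    | bot =>
      rw [consecutiveSum_of_eq_bot hprev, ht] at ha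
      simpa using ha
    | coe b =>
      rw [consecutiveSum_of_eq_coe hprev, Pi.add_apply, ht, ht, (prevInFiber_eq_coe hprev).1,
        CharTwo.add_self_eq_zero] at ha
      exact absurd ha zero_ne_one
  refine card_le_one.2 fun a ha b hb => ?_
  obtain ⟨hfa, hprev_a⟩ := key (mem_filter.1 ha).2
  obtain ⟨hfb, hprev_b⟩ := key (mem_filter.1 hb).2
  exact eq_of_prevInFiber_eq (hfa.trans hfb.symm) (hprev_a.trans hprev_b.symm)

end PreviousInFiber

lemma linearIndependent_of_pivot {ι κ R α : Type*} [Ring R] [NoZeroDivisors R] [Preorder α]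
    {b : ι → κ → R} (pivot : ι → κ) (rank : ι → α) (hpivot : ∀ i, b i (pivot i) ≠ 0)
    (hrank : ∀ i j, j ≠ i → b j (pivot i) ≠ 0 → rank i < rank j) : LinearIndependent R b := by
  classical
  rw [linearIndependent_iff']
  intro s g hg
  by_contra! hne
  obtain ⟨i₀, hi₀, hgi₀⟩ := hne
  obtain ⟨i, hi, hmax⟩ := (s.filter fun i => g i ≠ 0).exists_maximalFor rank
    ⟨i₀, mem_filter.2 ⟨hi₀, hgi₀⟩⟩
  rw [mem_filter] at hi
  have hterm : g i * b i (pivot i) = 0 := by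
    have hsum := congrFun hg (pivot i)
    rw [Finset.sum_apply, Finset.sum_eq_single_of_mem i hi.1] at hsum
    · exact hsum
    intro j hj hji
    by_contra hz
    have hlt := hrank i j hji (right_ne_zero_of_mul hz)
    exact hlt.not_ge (hmax (mem_filter.2 ⟨hj, left_ne_zero_of_mul hz⟩) hlt.le)
  exact mul_ne_zero hi.2 (hpivot i) hterm

section CycleVectors

variable {V W : Type*} [DecidableEq V] [DecidableEq W] {G : SimpleGraph V} {H : SimpleGraph W}

/-- The GF(2) sum of the indicator vectors of the edges in a list. -/
def edgeSum (l : List (Sym2 V)) : Sym2 V → ZMod 2 :=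
  (l.map fun e => Pi.single e 1).sum

lemma edgeSum_apply_of_notMem {l : List (Sym2 V)} {e : Sym2 V} (he : e ∉ l) :
    edgeSum l e = 0 := by
  induction l with
  | nil => rfl
  | cons a l ih =>
    rw [List.mem_cons, not_or] at he
    simpa [edgeSum, he.1] using ih he.2

lemma edgeSum_apply {l : List (Sym2 V)} (hl : l.Nodup) (e : Sym2 V) :
    edgeSum l e = if e ∈ l then 1 else 0 := by
  split_ifs with he
  · induction l with
    | nil => simp at he
    | cons a l ih =>
      rw [List.nodup_cons] at hl
      by_cases hea : e = a
      · simpa [edgeSum, hea] using edgeSum_apply_of_notMem hl.1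
      · simpa [edgeSum, hea] using ih hl.2 (List.mem_of_ne_of_mem hea he)
  · exact edgeSum_apply_of_notMem he

/-- `x` is the edge-indicator vector of a cycle of `G` of length at most `ℓ`. -/
def IsShortCycleVec (G : SimpleGraph V) (ℓ : ℕ) (x : Sym2 V → ZMod 2) : Prop :=
  ∃ (v : V) (w : G.Walk v v), w.IsCycle ∧ w.length ≤ ℓ ∧ ∀ e, x e = if e ∈ w.edges then 1 else 0

lemma isCycleVec_iff_exists_isShortCycleVec {x : Sym2 V → ZMod 2} :
    IsCycleVec G x ↔ ∃ ℓ, IsShortCycleVec G ℓ x :=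
  ⟨fun ⟨v, w, hw, hx⟩ => ⟨w.length, v, w, hw, le_rfl, hx⟩,
    fun ⟨_, v, w, hw, _, hx⟩ => ⟨v, w, hw, hx⟩⟩

lemma IsShortCycleVec.mono {ℓ ℓ' : ℕ} {x : Sym2 V → ZMod 2} (hx : IsShortCycleVec G ℓ x)
    (h : ℓ ≤ ℓ') : IsShortCycleVec G ℓ' x := by
  obtain ⟨v, w, hw, hlen, hx⟩ := hx
  exact ⟨v, w, hw, hlen.trans h, hx⟩

lemma isShortCycleVec_edgeSum {v : V} {w : G.Walk v v} (hw : w.IsCycle) :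
    IsShortCycleVec G w.length (edgeSum w.edges) :=
  ⟨v, w, hw, le_rfl, edgeSum_apply hw.edges_nodup⟩

lemma IsShortCycleVec.map_iso (f : G ≃g H) {ℓ : ℕ} {x : Sym2 V → ZMod 2}
    (hx : IsShortCycleVec G ℓ x) : IsShortCycleVec H ℓ (x ∘ Sym2.map f.symm) := by
  obtain ⟨v, w, hw, hlen, hx⟩ := hx
  refine ⟨f v, w.map f.toHom, hw.map f.injective, by simpa using hlen, fun e => ?_⟩
  have hmem : Sym2.map f.symm e ∈ w.edges ↔ e ∈ (w.map f.toHom).edges := by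
    rw [SimpleGraph.Walk.edges_map, List.mem_map]
    refine ⟨fun h => ⟨_, h, ?_⟩, ?_⟩
    · induction e with | _ a b => simp
    · rintro ⟨e, he, rfl⟩
      induction e with | _ a b => simpa using he
  simp only [Function.comp_apply, hx, hmem]

lemma IsCycleVec.map_iso (f : G ≃g H) {x : Sym2 V → ZMod 2} (hx : IsCycleVec G x) :
    IsCycleVec H (x ∘ Sym2.map f.symm) := by
  obtain ⟨ℓ, hx⟩ := isCycleVec_iff_exists_isShortCycleVec.1 hx
  exact isCycleVec_iff_exists_isShortCycleVec.2 ⟨ℓ, hx.map_iso f⟩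

/-- `G` has a cycle basis made of cycles of length at most `ℓ`, with every edge on at most `m` of
them. -/
def HasSparseCycleBasis (G : SimpleGraph V) (ℓ m : ℕ) : Prop :=
  ∃ B : Finset (Sym2 V → ZMod 2),
    (∀ x ∈ B, IsShortCycleVec G ℓ x) ∧
    LinearIndependent (ZMod 2) ((↑) : B → (Sym2 V → ZMod 2)) ∧
    Submodule.span (ZMod 2) (B : Set (Sym2 V → ZMod 2)) = cycleSpace G ∧
    (∀ e ∈ G.edgeSet, (B.filter fun x => x e = 1).card ≤ m)

lemma HasSparseCycleBasis.of_family {ι : Type*} [Fintype ι] {ℓ m : ℕ} {b : ι → Sym2 V → ZMod 2}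
    (hshort : ∀ i, IsShortCycleVec G ℓ (b i)) (hli : LinearIndependent (ZMod 2) b)
    (hspan : cycleSpace G ≤ Submodule.span (ZMod 2) (Set.range b))
    (hcard : ∀ e ∈ G.edgeSet, #{i | b i e = 1} ≤ m) : HasSparseCycleBasis G ℓ m := by
  classical
  have hcoe : ((univ.image b : Finset _) : Set (Sym2 V → ZMod 2)) = Set.range b := by simp
  refine ⟨univ.image b, forall_mem_image.2 fun i _ => hshort i, ?_, ?_, fun e he => ?_⟩
  · change LinearIndepOn (ZMod 2) id ((univ.image b : Finset _) : Set (Sym2 V → ZMod 2))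
    rw [hcoe]
    exact hli.linearIndepOn_id
  · rw [hcoe]
    refine le_antisymm (Submodule.span_le.2 ?_) hspan
    rintro _ ⟨i, rfl⟩
    exact Submodule.subset_span (isCycleVec_iff_exists_isShortCycleVec.2 ⟨ℓ, hshort i⟩)
  · rw [filter_image]
    exact card_image_le.trans (hcard e he)

lemma cycleSpace_le_map_funLeft_of_iso (f : G ≃g H) :
    cycleSpace H ≤
      (cycleSpace G).map (LinearMap.funLeft (ZMod 2) (ZMod 2) (Sym2.map f.symm)) := by
  rw [cycleSpace, cycleSpace, Submodule.map_span]
  refine Submodule.span_mono fun x hx => ⟨_, hx.map_iso f.symm, ?_⟩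
  ext e
  induction e with | _ a b => simp [LinearMap.funLeft]

lemma HasSparseCycleBasis.map_iso (f : G ≃g H) {ℓ m : ℕ} (hG : HasSparseCycleBasis G ℓ m) :
    HasSparseCycleBasis H ℓ m := by
  obtain ⟨B, hB, hli, hspan, hcard⟩ := hG
  let L := LinearMap.funLeft (ZMod 2) (ZMod 2) (Sym2.map f.symm)
  have hL : LinearMap.ker L = ⊥ := LinearMap.ker_eq_bot.2 <|
    LinearMap.funLeft_injective_of_surjective _ _ _ fun e =>
      ⟨Sym2.map f e, by induction e with | _ a b => simp⟩
  refine .of_family (b := fun x : B => L x) (fun x => (hB x x.2).map_iso f) (hli.map' L hL) ?_ ?_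
  · refine (cycleSpace_le_map_funLeft_of_iso f).trans_eq ?_
    rw [← hspan, Submodule.map_span, Set.range_comp', Subtype.range_coe]
  · intro e he
    have hmem : Sym2.map f.symm e ∈ G.edgeSet := by
      induction e with | _ a b => simpa using f.symm.map_adj_iff.2 he
    refine le_trans ?_ (hcard _ hmem)
    refine card_le_card_of_injOn (↑) (fun x hx => ?_) Subtype.val_injective.injOn
    simpa [L, LinearMap.funLeft] using hx

/-- The edge-indicator vector of the triangle with apex `c` and opposite edge `e`. -/
def triangleVec (c : V) : Sym2 V → Sym2 V → ZMod 2 :=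
  Sym2.lift ⟨fun a b => edgeSum [s(c, a), s(a, b), s(b, c)], fun a b => by
    simp only [edgeSum, List.map_cons, List.map_nil, List.sum_cons, List.sum_nil,
      Sym2.eq_swap (a := c), Sym2.eq_swap (a := b) (b := a)]
    abel⟩

lemma triangleVec_eq_one {c : V} {e e' : Sym2 V} (h : triangleVec c e e' = 1) :
    e' = e ∨ ∃ a ∈ e, e' = s(c, a) := by
  induction e with | _ a b
  by_contra! hne
  refine zero_ne_one ((edgeSum_apply_of_notMem ?_).symm.trans h)
  have ha := hne.2 a (Sym2.mem_mk_left a b)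
  have hb := hne.2 b (Sym2.mem_mk_right a b)
  rw [Sym2.eq_swap] at hb
  simp [ha, hb, hne.1]

lemma triangleVec_apply_of_notMem {c : V} {e e' : Sym2 V} (hc : c ∉ e') :
    triangleVec c e e' = if e' = e then 1 else 0 := by
  have hne : ∀ a, e' ≠ s(c, a) := by
    rintro a rfl
    exact hc (Sym2.mem_mk_left c a)
  induction e with | _ a b
  simp [triangleVec, edgeSum, Pi.single_apply, hne, Sym2.eq_swap (b := c)]

lemma isShortCycleVec_triangleVec {c : V} {e : Sym2 V} (he : e ∈ G.edgeSet)
    (hc : ∀ a ∈ e, G.Adj c a) : IsShortCycleVec G 3 (triangleVec c e) := by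
  induction e with | _ a b
  have hca : G.Adj c a := hc a (Sym2.mem_mk_left a b)
  have hab : G.Adj a b := he
  have hbc : G.Adj b c := (hc b (Sym2.mem_mk_right a b)).symm
  have hw : (SimpleGraph.Walk.cons hca (.cons hab (.cons hbc .nil))).IsCycle := by
    simp [SimpleGraph.Walk.cons_isCycle_iff, hca.ne, hca.ne', hab.ne, hbc.ne, hbc.ne']
  exact isShortCycleVec_edgeSum hw

lemma isShortCycleVec_triangleVec_add {c v a b : V} (hca : G.Adj c a) (hcb : G.Adj c b)
    (hva : G.Adj v a) (hvb : G.Adj v b) (hcv : c ≠ v) (hab : a ≠ b) :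
    IsShortCycleVec G 4 (triangleVec c s(v, a) + triangleVec c s(v, b)) := by
  have hw : (SimpleGraph.Walk.cons hca
      (.cons hva.symm (.cons hvb (.cons hcb.symm .nil)))).IsCycle := by
    simp [SimpleGraph.Walk.cons_isCycle_iff, hca.ne', hcb.ne, hcb.ne', hva.ne',
      hvb.ne, hcv, hcv.symm, hab]
  have hsum : triangleVec c s(v, a) + triangleVec c s(v, b) =
      edgeSum [s(c, a), s(a, v), s(v, b), s(b, c)] := by
    simp only [triangleVec, Sym2.lift_mk, edgeSum, List.map_cons, List.map_nil, List.sum_cons,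
      List.sum_nil, Sym2.eq_swap (a := a), Sym2.eq_swap (a := b) (b := c)]
    linear_combination ZModModule.add_self (Pi.single s(c, v) 1 : Sym2 V → ZMod 2)
  rw [hsum]
  exact isShortCycleVec_edgeSum hw

lemma add_edgeSum_edges_add_mem {S : Submodule (ZMod 2) (Sym2 V → ZMod 2)}
    {r : V → Sym2 V → ZMod 2} (hr : ∀ a b, G.Adj a b → r a + Pi.single s(a, b) 1 + r b ∈ S)
    {a b : V} (w : G.Walk a b) : r a + edgeSum w.edges + r b ∈ S := by
  induction w with
  | nil => simp [edgeSum, ZModModule.add_self]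
  | @cons u v w h p ih =>
    convert S.add_mem (hr _ _ h) ih using 1
    simp only [edgeSum, SimpleGraph.Walk.edges_cons, List.map_cons, List.sum_cons]
    linear_combination -ZModModule.add_self (r v)

lemma cycleSpace_le_of_add_single_add_mem {S : Submodule (ZMod 2) (Sym2 V → ZMod 2)}
    {r : V → Sym2 V → ZMod 2} (hr : ∀ a b, G.Adj a b → r a + Pi.single s(a, b) 1 + r b ∈ S) :
    cycleSpace G ≤ S := by
  refine Submodule.span_le.2 ?_
  rintro x ⟨v, w, hw, hx⟩
  have hxw : x = edgeSum w.edges :=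
    funext fun e => (hx e).trans (edgeSum_apply hw.edges_nodup e).symm
  have hmem := add_edgeSum_edges_add_mem hr w
  rwa [add_right_comm, ZModModule.add_self, zero_add, ← hxw] at hmem

/-- Coning each edge off to `c` turns a closed walk into a sum of triangles, since every edge at
`c` is used an even number of times. -/
lemma cycleSpace_le_of_triangleVec_mem {S : Submodule (ZMod 2) (Sym2 V → ZMod 2)} (c : V)
    (hS : ∀ e ∈ G.edgeSet, c ∉ e → triangleVec c e ∈ S) : cycleSpace G ≤ S := by
  refine cycleSpace_le_of_add_single_add_mem
    (r := fun a => if a = c then 0 else Pi.single s(c, a) 1) fun a b hab => ?_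
  by_cases ha : a = c
  · subst ha
    simp [hab.ne', ZModModule.add_self]
  by_cases hb : b = c
  · subst hb
    simp [ha, Sym2.eq_swap (a := a), ZModModule.add_self]
  · simpa [ha, hb, triangleVec, edgeSum, Sym2.eq_swap (a := b) (b := c), add_assoc] using
      hS s(a, b) hab (by simp [Ne.symm ha, Ne.symm hb])

/-- The four faces of a tetrahedron sum to zero. -/
lemma triangleVec_add_triangleVec_add_triangleVec (c m a b : V) :
    triangleVec c s(a, m) + triangleVec c s(b, m) + triangleVec m s(a, b) =
      triangleVec c s(a, b) := by
  simp only [triangleVec, Sym2.lift_mk, edgeSum, List.map_cons, List.map_nil, List.sum_cons,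
    List.sum_nil, Sym2.eq_swap (a := m), Sym2.eq_swap (a := b) (b := c)]
  linear_combination ZModModule.add_self (Pi.single s(a, m) 1 : Sym2 V → ZMod 2) +
    ZModModule.add_self (Pi.single s(b, m) 1 : Sym2 V → ZMod 2) +
    ZModModule.add_self (Pi.single s(c, m) 1 : Sym2 V → ZMod 2)

end CycleVectors

section Cone

variable {W : Type*} (H : SimpleGraph W)

/-- The cone over `H`: an apex `none` is joined to every vertex of `H`. -/
def coneGraph : SimpleGraph (Option W) :=
  H.map some ⊔ SimpleGraph.starGraph none

variable {H}

lemma coneGraph_adj_none_some (a : W) : (coneGraph H).Adj none (some a) := by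
  simp [coneGraph]

lemma coneGraph_adj_some_some {a b : W} : (coneGraph H).Adj (some a) (some b) ↔ H.Adj a b := by
  simp only [coneGraph, SimpleGraph.sup_adj, SimpleGraph.starGraph_adj, reduceCtorEq, or_self,
    and_false, or_false]
  exact SimpleGraph.map_adj_apply (f := Function.Embedding.some)

lemma map_some_mem_edgeSet_coneGraph {e : Sym2 W} :
    e.map some ∈ (coneGraph H).edgeSet ↔ e ∈ H.edgeSet := by
  induction e with | _ a b => exact coneGraph_adj_some_some

lemma exists_of_mem_edgeSet_coneGraph {e : Sym2 (Option W)} (he : e ∈ (coneGraph H).edgeSet) :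
    (∃ a, e = s(none, some a)) ∨ ∃ e' ∈ H.edgeSet, e = e'.map some := by
  induction e with | _ a b
  cases a with
  | none =>
    cases b with
    | none => exact ((coneGraph H).irrefl he).elim
    | some b => exact .inl ⟨b, rfl⟩
  | some a =>
    cases b with
    | none => exact .inl ⟨a, Sym2.eq_swap⟩
    | some b => exact .inr ⟨s(a, b), coneGraph_adj_some_some.1 he, rfl⟩

lemma coneGraph_connected : (coneGraph H).Connected :=
  (SimpleGraph.connected_starGraph none).mono le_sup_right

end Cone

section EdgeTriangles

variable {V : Type*} (G : SimpleGraph V)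

/-- The graph obtained from `G` by attaching a triangle to every edge: a new vertex for each edge
is joined to the two ends of that edge. -/
def edgeTriangleGraph : SimpleGraph (V ⊕ G.edgeSet) where
  Adj
    | .inl u, .inl v => G.Adj u v
    | .inl u, .inr e => u ∈ e.1
    | .inr e, .inl u => u ∈ e.1
    | .inr _, .inr _ => False
  symm := ⟨by rintro (u | e) (v | e') h <;> first | exact h | exact SimpleGraph.Adj.symm (G := G) h⟩
  loopless := ⟨by rintro (u | e) h <;> first | exact h | exact G.irrefl h⟩

variable {G}

lemma exists_dart_edge_eq (e : G.edgeSet) : ∃ d : G.Dart, d.edge = e := by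
  obtain ⟨⟨a, b⟩, he⟩ := e
  exact ⟨⟨(a, b), he⟩, rfl⟩

/-- The edge of `edgeTriangleGraph G` from the start of the dart `d` to the new vertex of its
edge. -/
def dartSide (d : G.Dart) : Sym2 (V ⊕ G.edgeSet) :=
  s(.inl d.fst, .inr ⟨d.edge, d.edge_mem⟩)

lemma dartSide_injective : Function.Injective (dartSide : G.Dart → Sym2 (V ⊕ G.edgeSet)) := by
  intro d d' h
  simp only [dartSide, Sym2.eq_iff, Sum.inl.injEq, Sum.inr.injEq, Subtype.mk.injEq, reduceCtorEq,
    false_and, or_false] at h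
  obtain ⟨hfst, hedge⟩ := h
  rcases SimpleGraph.dart_edge_eq_iff d d' |>.1 hedge with rfl | rfl
  · rfl
  · exact absurd hfst d'.snd_ne_fst

lemma dartSide_mem_edgeSet (d : G.Dart) : dartSide d ∈ (edgeTriangleGraph G).edgeSet :=
  Sym2.mem_mk_left d.fst d.snd

lemma map_inl_mem_edgeSet_edgeTriangleGraph {e : Sym2 V} (he : e ∈ G.edgeSet) :
    e.map .inl ∈ (edgeTriangleGraph G).edgeSet := by
  induction e with | _ a b => exact he

lemma exists_of_mem_edgeSet_edgeTriangleGraph {e : Sym2 (V ⊕ G.edgeSet)}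
    (he : e ∈ (edgeTriangleGraph G).edgeSet) :
    (∃ d : G.Dart, e = dartSide d) ∨ ∃ e' : G.edgeSet, e = e'.1.map .inl := by
  have exists_dart {u : V} : ∀ e' : G.edgeSet, u ∈ e'.1 →
      ∃ d : G.Dart, s(.inl u, .inr e') = dartSide d := by
    rintro ⟨_, h⟩ ⟨w, rfl⟩
    exact ⟨⟨(u, w), h⟩, rfl⟩
  induction e with | _ a b
  rcases a with u | e₁ <;> rcases b with v | e₂
  · exact .inr ⟨⟨s(u, v), he⟩, rfl⟩
  · exact .inl (exists_dart e₂ he)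
  · rw [Sym2.eq_swap]
    exact .inl (exists_dart e₁ he)
  · exact he.elim

/-- The inclusion of `G` in the cone over `edgeTriangleGraph G`, as an induced subgraph. -/
def embeddingConeEdgeTriangle : G ↪g coneGraph (edgeTriangleGraph G) where
  toFun v := some (.inl v)
  inj' _ _ h := Sum.inl_injective (Option.some_injective _ h)
  map_rel_iff' := coneGraph_adj_some_some

end EdgeTriangles

section ConeCells

variable {V : Type*} [DecidableEq V] {G : SimpleGraph V}

/-- The triangle spanned by the apex of the cone and the edge `dartSide d`. -/
def dartTriangle (d : G.Dart) : Sym2 (Option (V ⊕ G.edgeSet)) → ZMod 2 :=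
  triangleVec none ((dartSide d).map some)

/-- The triangle attached to the edge `e` of `G`, inside the cone. -/
def edgeTriangle (e : G.edgeSet) : Sym2 (Option (V ⊕ G.edgeSet)) → ZMod 2 :=
  triangleVec (some (.inr e)) ((e.1.map .inl).map some)

lemma none_notMem_map_some {α : Type*} (e : Sym2 α) : none ∉ e.map some := by
  simp [Sym2.mem_map]

lemma dartTriangle_apply_map_some (d : G.Dart) (e : Sym2 (V ⊕ G.edgeSet)) :
    dartTriangle d (e.map some) = if e = dartSide d then 1 else 0 := by
  simp only [dartTriangle, triangleVec_apply_of_notMem (none_notMem_map_some e),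
    (Sym2.map.injective (Option.some_injective _)).eq_iff]

lemma dartTriangle_apply_map_inl (d : G.Dart) (e : Sym2 V) :
    dartTriangle d ((e.map .inl).map some) = 0 := by
  rw [dartTriangle_apply_map_some, if_neg]
  induction e with | _ a b
  simp [dartSide]

lemma dartTriangle_apply_none_inl (d : G.Dart) (v : V) :
    dartTriangle d s(none, some (.inl v)) = if d.fst = v then 1 else 0 := by
  simp [dartTriangle, dartSide, triangleVec, edgeSum, Pi.single_apply, eq_comm (a := v)]

lemma edge_eq_of_dartTriangle_apply_none_inr {d : G.Dart} {e : G.edgeSet}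
    (h : dartTriangle d s(none, some (.inr e)) = 1) : d.edge = e := by
  rcases triangleVec_eq_one h with h | ⟨a, ha, h⟩
  · exact absurd (h ▸ Sym2.mem_mk_left none _) (none_notMem_map_some _)
  · rw [Sym2.congr_right] at h
    subst h
    simpa [dartSide, eq_comm, Subtype.ext_iff] using ha

lemma edgeTriangle_apply_map_inl (e e' : G.edgeSet) :
    edgeTriangle e ((e'.1.map .inl).map some) = if e' = e then 1 else 0 := by
  have hmem : some (.inr e) ∉ (e'.1.map Sum.inl).map (some : V ⊕ G.edgeSet → _) := by
    simp [Sym2.mem_map]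
  simp only [edgeTriangle, triangleVec_apply_of_notMem hmem,
    (Sym2.map.injective (Option.some_injective _)).eq_iff,
    (Sym2.map.injective Sum.inl_injective).eq_iff, Subtype.ext_iff]

lemma edgeTriangle_apply_none (e : G.edgeSet) (x : Option (V ⊕ G.edgeSet)) :
    edgeTriangle e s(none, x) = 0 := by
  induction e with | _ e he
  induction e with | _ a b
  simp [edgeTriangle, triangleVec, edgeSum]

lemma edge_eq_of_edgeTriangle_apply_dartSide {e : G.edgeSet} {d : G.Dart}
    (h : edgeTriangle e ((dartSide d).map some) = 1) : d.edge = e := by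
  rcases triangleVec_eq_one h with h | ⟨a, -, h⟩
  · have hmem : some (.inr ⟨d.edge, d.edge_mem⟩) ∈ (dartSide d).map some := by simp [dartSide]
    rw [h] at hmem
    simp [Sym2.mem_map] at hmem
  · have hmem : some (.inr e) ∈ (dartSide d).map some := h ▸ Sym2.mem_mk_left _ a
    simpa [dartSide, eq_comm, Subtype.ext_iff] using hmem

lemma triangleVec_none_map_edge_eq (d : G.Dart) :
    triangleVec none ((d.edge.map .inl).map some) =
      dartTriangle d + dartTriangle d.symm + edgeTriangle ⟨d.edge, d.edge_mem⟩ := by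
  simp only [dartTriangle, edgeTriangle, dartSide, SimpleGraph.Dart.edge_symm]
  exact (triangleVec_add_triangleVec_add_triangleVec _ _ _ _).symm

lemma isShortCycleVec_dartTriangle (d : G.Dart) :
    IsShortCycleVec (coneGraph (edgeTriangleGraph G)) 3 (dartTriangle d) := by
  refine isShortCycleVec_triangleVec
    (map_some_mem_edgeSet_coneGraph.2 (dartSide_mem_edgeSet d)) fun x hx => ?_
  obtain ⟨a, -, rfl⟩ := Sym2.mem_map.1 hx
  exact coneGraph_adj_none_some a

lemma isShortCycleVec_dartTriangle_add {d d' : G.Dart} (hfst : d'.fst = d.fst) (hne : d' ≠ d) :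
    IsShortCycleVec (coneGraph (edgeTriangleGraph G)) 4 (dartTriangle d + dartTriangle d') := by
  have hside : dartSide d' = s(.inl d.fst, .inr ⟨d'.edge, d'.edge_mem⟩) := by
    rw [dartSide, hfst]
  have hside_mem := dartSide_mem_edgeSet d'
  have hedge : d.edge ≠ d'.edge := fun h =>
    hne (dartSide_injective (by simp only [dartSide, hfst, h]))
  rw [hside] at hside_mem
  simp only [dartTriangle, hside]
  exact isShortCycleVec_triangleVec_add (coneGraph_adj_none_some _) (coneGraph_adj_none_some _)
    (coneGraph_adj_some_some.2 (dartSide_mem_edgeSet d)) (coneGraph_adj_some_some.2 hside_mem)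
    (by simp) (by simpa using hedge)

lemma isShortCycleVec_edgeTriangle (e : G.edgeSet) :
    IsShortCycleVec (coneGraph (edgeTriangleGraph G)) 3 (edgeTriangle e) := by
  refine isShortCycleVec_triangleVec (map_some_mem_edgeSet_coneGraph.2
    (map_inl_mem_edgeSet_edgeTriangleGraph e.2)) fun x hx => ?_
  obtain ⟨_, hy, rfl⟩ := Sym2.mem_map.1 hx
  obtain ⟨v, hv, rfl⟩ := Sym2.mem_map.1 hy
  exact coneGraph_adj_some_some.2 hv

variable [Fintype G.Dart] [LinearOrder G.Dart]

/-- The cells of the cone over `edgeTriangleGraph G`. The darts starting at a vertex `v` are listed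
in increasing order: the first one contributes a triangle through the apex and `v`, every further
one the square through the apex, `v` and the new vertices of two consecutive darts. Every edge of
`G` contributes its attached triangle. -/
def coneCell : G.Dart ⊕ G.edgeSet → Sym2 (Option (V ⊕ G.edgeSet)) → ZMod 2 :=
  Sum.elim (consecutiveSum (fun d => d.fst) dartTriangle) edgeTriangle

lemma isShortCycleVec_coneCell (i : G.Dart ⊕ G.edgeSet) :
    IsShortCycleVec (coneGraph (edgeTriangleGraph G)) 4 (coneCell i) := by
  rcases i with d | e
  · simp only [coneCell, Sum.elim_inl]
    cases hprev : prevInFiber (fun d : G.Dart => d.fst) d with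
    | bot =>
      rw [consecutiveSum_of_eq_bot hprev]
      exact (isShortCycleVec_dartTriangle d).mono (by norm_num)
    | coe d' =>
      obtain ⟨hfst, hlt⟩ := prevInFiber_eq_coe hprev
      rw [consecutiveSum_of_eq_coe hprev]
      exact isShortCycleVec_dartTriangle_add hfst hlt.ne
  · exact (isShortCycleVec_edgeTriangle e).mono (by norm_num)

lemma coneCell_inl_apply_dartSide {d d' : G.Dart}
    (h : coneCell (.inl d) ((dartSide d').map some) = 1) :
    d = d' ∨ prevInFiber (fun d : G.Dart => d.fst) d = d' := by
  have dart_eq {d : G.Dart} (h : dartTriangle d ((dartSide d').map some) = 1) : d = d' := by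
    rw [dartTriangle_apply_map_some] at h
    exact (dartSide_injective (by simpa using h)).symm
  rcases consecutiveSum_apply_eq_one h with h | ⟨d'', hprev, h⟩
  · exact .inl (dart_eq h)
  · exact .inr (dart_eq h ▸ hprev)

lemma coneCell_inl_apply_dartSide_self (d : G.Dart) :
    coneCell (.inl d) ((dartSide d).map some) = 1 := by
  simp only [coneCell, Sum.elim_inl]
  cases hprev : prevInFiber (fun d : G.Dart => d.fst) d with
  | bot => simp [consecutiveSum_of_eq_bot hprev, dartTriangle_apply_map_some]
  | coe d' =>
    have hne : d ≠ d' := (prevInFiber_eq_coe hprev).2.ne'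
    simp [consecutiveSum_of_eq_coe hprev, dartTriangle_apply_map_some,
      dartSide_injective.eq_iff, hne]

lemma coneCell_inl_apply_map_inl (d : G.Dart) (e : Sym2 V) :
    coneCell (.inl d) ((e.map .inl).map some) ≠ 1 := by
  intro h
  rcases consecutiveSum_apply_eq_one h with h | ⟨d', -, h⟩ <;>
    simp [dartTriangle_apply_map_inl] at h

/-- Each cell is detected by the one of its edges that avoids the apex: `dartSide d` for the dart
cells, and the edge of `G` itself for the attached triangles. -/
lemma linearIndependent_coneCell :
    LinearIndependent (ZMod 2) (coneCell : G.Dart ⊕ G.edgeSet → _) := by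
  have eq_one : ∀ x : ZMod 2, x ≠ 0 → x = 1 := by decide
  refine linearIndependent_of_pivot
    (Sum.elim (fun d => (dartSide d).map some) fun e => (e.1.map .inl).map some)
    (Sum.elim (fun d => (d : WithTop G.Dart)) fun _ => ⊤) ?_ ?_
  · rintro (d | e)
    · exact ne_zero_of_eq_one (coneCell_inl_apply_dartSide_self d)
    · exact ne_zero_of_eq_one (by simp [coneCell, edgeTriangle_apply_map_inl])
  · rintro (d | e) (d' | e') hne h
    · rcases coneCell_inl_apply_dartSide (eq_one _ h) with rfl | hprev
      · exact absurd rfl hne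
      · exact WithTop.coe_lt_coe.2 (prevInFiber_eq_coe hprev).2
    · exact WithTop.coe_lt_top d
    · exact absurd (eq_one _ h) (coneCell_inl_apply_map_inl d' e.1)
    · have hee' : e ≠ e' := fun he => hne (congrArg Sum.inr he.symm)
      exact absurd (by simp [coneCell, edgeTriangle_apply_map_inl, hee']) h

lemma dartTriangle_mem_span_coneCell (d : G.Dart) :
    dartTriangle d ∈ Submodule.span (ZMod 2) (Set.range (coneCell (G := G))) := by
  refine Submodule.span_mono ?_
    (mem_span_range_consecutiveSum (ZMod 2) (fun d : G.Dart => d.fst) dartTriangle d)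
  rintro _ ⟨d, rfl⟩
  exact ⟨.inl d, rfl⟩

lemma cycleSpace_coneGraph_le_span_coneCell :
    cycleSpace (coneGraph (edgeTriangleGraph G)) ≤
      Submodule.span (ZMod 2) (Set.range coneCell) := by
  refine cycleSpace_le_of_triangleVec_mem none fun e he hnone => ?_
  rcases exists_of_mem_edgeSet_coneGraph he with ⟨a, rfl⟩ | ⟨e', he', rfl⟩
  · exact absurd (Sym2.mem_mk_left _ _) hnone
  rcases exists_of_mem_edgeSet_edgeTriangleGraph he' with ⟨d, rfl⟩ | ⟨e, rfl⟩
  · exact dartTriangle_mem_span_coneCell d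
  · obtain ⟨d, hd⟩ := exists_dart_edge_eq e
    rw [← hd, triangleVec_none_map_edge_eq]
    exact add_mem (add_mem (dartTriangle_mem_span_coneCell _) (dartTriangle_mem_span_coneCell _))
      (Submodule.subset_span ⟨.inr _, rfl⟩)

variable [Fintype G.edgeSet]

lemma card_coneCell_apply_eq_one (x : Sym2 (Option (V ⊕ G.edgeSet))) :
    #{i | coneCell i x = 1} =
      #{d : G.Dart | coneCell (.inl d) x = 1} + #{e : G.edgeSet | edgeTriangle e x = 1} := by
  simp only [card_filter, Fintype.sum_sum_type]
  rfl

lemma card_coneCell_apply_none_inl (v : V) :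
    #{i : G.Dart ⊕ G.edgeSet | coneCell i s(none, some (.inl v)) = 1} ≤ 1 := by
  rw [card_coneCell_apply_eq_one]
  simp only [edgeTriangle_apply_none, zero_ne_one, filter_false, card_empty, add_zero]
  exact card_consecutiveSum_apply_eq_one_le_one (dartTriangle_apply_none_inl · v)

lemma card_coneCell_apply_none_inr (e : G.edgeSet) :
    #{i : G.Dart ⊕ G.edgeSet | coneCell i s(none, some (.inr e)) = 1} ≤ 4 := by
  rw [card_coneCell_apply_eq_one]
  simp only [edgeTriangle_apply_none, zero_ne_one, filter_false, card_empty, add_zero]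
  have hdart : #{d : G.Dart | dartTriangle d s(none, some (.inr e)) = 1} ≤ 2 := by
    obtain ⟨d, hd⟩ := exists_dart_edge_eq e
    refine (card_le_card fun d' hd' => ?_).trans (card_le_two (a := d) (b := d.symm))
    have hedge := edge_eq_of_dartTriangle_apply_none_inr (mem_filter.1 hd').2
    simpa using SimpleGraph.dart_edge_eq_iff d' d |>.1 (hedge.trans hd.symm)
  calc _ ≤ 2 * #{d : G.Dart | dartTriangle d s(none, some (.inr e)) = 1} :=
        card_consecutiveSum_apply_eq_one_le _ _ _
    _ ≤ 4 := by omega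

lemma card_coneCell_apply_dartSide (d : G.Dart) :
    #{i : G.Dart ⊕ G.edgeSet | coneCell i ((dartSide d).map some) = 1} ≤ 3 := by
  rw [card_coneCell_apply_eq_one]
  have hdart : #{d' : G.Dart | dartTriangle d' ((dartSide d).map some) = 1} ≤ 1 := by
    refine (card_le_card fun d' hd' => ?_).trans_eq (card_singleton d)
    simpa [dartTriangle_apply_map_some, dartSide_injective.eq_iff, eq_comm] using hd'
  have hedge : #{e : G.edgeSet | edgeTriangle e ((dartSide d).map some) = 1} ≤ 1 := by
    refine (card_le_card fun e he => ?_).trans_eq (card_singleton ⟨d.edge, d.edge_mem⟩)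
    exact mem_singleton.2
      (Subtype.ext (edge_eq_of_edgeTriangle_apply_dartSide (mem_filter.1 he).2).symm)
  calc _ ≤ 2 * #{d' : G.Dart | dartTriangle d' ((dartSide d).map some) = 1} + 1 :=
        add_le_add (card_consecutiveSum_apply_eq_one_le _ _ _) hedge
    _ ≤ 3 := by omega

lemma card_coneCell_apply_map_inl (e : G.edgeSet) :
    #{i : G.Dart ⊕ G.edgeSet | coneCell i ((e.1.map .inl).map some) = 1} ≤ 1 := by
  refine (card_le_card ?_).trans_eq (card_singleton (.inr e))
  rintro (d | e') hi
  · exact absurd (mem_filter.1 hi).2 (coneCell_inl_apply_map_inl d e.1)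
  · simpa [coneCell, edgeTriangle_apply_map_inl, eq_comm] using hi

lemma card_coneCell_apply_le_four {x : Sym2 (Option (V ⊕ G.edgeSet))}
    (hx : x ∈ (coneGraph (edgeTriangleGraph G)).edgeSet) :
    #{i : G.Dart ⊕ G.edgeSet | coneCell i x = 1} ≤ 4 := by
  rcases exists_of_mem_edgeSet_coneGraph hx with ⟨v | e, rfl⟩ | ⟨y, hy, rfl⟩
  · exact (card_coneCell_apply_none_inl v).trans (by norm_num)
  · exact card_coneCell_apply_none_inr e
  rcases exists_of_mem_edgeSet_edgeTriangleGraph hy with ⟨d, rfl⟩ | ⟨e, rfl⟩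
  · exact (card_coneCell_apply_dartSide d).trans (by norm_num)
  · exact (card_coneCell_apply_map_inl e).trans (by norm_num)

end ConeCells

lemma hasSparseCycleBasis_coneGraph_edgeTriangleGraph {V : Type*} [DecidableEq V] [Finite V]
    (G : SimpleGraph V) :
    HasSparseCycleBasis (coneGraph (edgeTriangleGraph G)) 4 4 := by
  classical
  have := Fintype.ofFinite V
  let _ : LinearOrder G.Dart := .lift' (Fintype.equivFin G.Dart) (Fintype.equivFin G.Dart).injective
  exact .of_family isShortCycleVec_coneCell linearIndependent_coneCell
    cycleSpace_coneGraph_le_span_coneCell fun _ => card_coneCell_apply_le_four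

theorem exists_local_sparse_cycle_basis_supergraph_general {V : Type*} [Finite V]
    (G : SimpleGraph V) :
    ∃ Ghat : SimpleGraph (Fin (Nat.card V + G.edgeSet.ncard + 1)),
      Ghat.Connected ∧ Nonempty (G ↪g Ghat) ∧ HasSparseCycleBasis Ghat 4 4 := by
  classical
  have hcard : Nat.card (Option (V ⊕ G.edgeSet)) = Nat.card V + G.edgeSet.ncard + 1 := by
    rw [Finite.card_option, Nat.card_sum, Nat.card_coe_set_eq]
  let f := SimpleGraph.Iso.map (Finite.equivFinOfCardEq hcard) (coneGraph (edgeTriangleGraph G))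
  exact ⟨_, f.connected_iff.1 coneGraph_connected, ⟨f.toEmbedding.comp embeddingConeEdgeTriangle⟩,
    (hasSparseCycleBasis_coneGraph_edgeTriangleGraph G).map_iso f⟩

lemma card_add_ncard_edgeSet_add_one_le {V : Type*} [Finite V] [Nonempty V] (G : SimpleGraph V) :
    Nat.card V + G.edgeSet.ncard + 1 ≤ 2 * Nat.card V ^ 2 := by
  classical
  have := Fintype.ofFinite V
  have hedge : G.edgeSet.ncard ≤ (Nat.card V).choose 2 := by
    rw [Set.ncard_eq_toFinset_card', Nat.card_eq_fintype_card]
    exact G.card_edgeFinset_le_card_choose_two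
  have hpos : 0 < Nat.card V := Nat.card_pos
  have hchoose := Nat.choose_two_right (Nat.card V) ▸ hedge
  have hhalf := Nat.div_mul_le_self (Nat.card V * (Nat.card V - 1)) 2
  obtain ⟨k, hk⟩ := Nat.exists_eq_succ_of_ne_zero hpos.ne'
  simp only [hk, Nat.succ_sub_one] at hchoose hhalf ⊢
  nlinarith

/-- For every degree bound `d` there is a constant `C` such that: every
connected graph `G` of maximum degree at most `d` on `n` vertices embeds as an induced
subgraph into a connected graph `Ĝ` on `N ≤ C·n²` vertices which admits a cycle basis
consisting of cycles of length at most 4, with every edge of `Ĝ` lying in at most 4 basis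
cycles. -/
theorem exists_local_sparse_cycle_basis_supergraph (d : ℕ) :
    ∃ C : ℕ, 0 < C ∧ ∀ (n : ℕ) (G : SimpleGraph (Fin n)),
      G.Connected → (∀ v, (G.neighborSet v).ncard ≤ d) →
      ∃ N : ℕ, N ≤ C * n ^ 2 ∧ ∃ Ghat : SimpleGraph (Fin N),
        Ghat.Connected ∧ Nonempty (G ↪g Ghat) ∧
        ∃ B : Finset (Sym2 (Fin N) → ZMod 2),
          (∀ x ∈ B, ∃ (v : Fin N) (w : Ghat.Walk v v), w.IsCycle ∧ w.length ≤ 4 ∧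
            ∀ e, x e = if e ∈ w.edges then 1 else 0) ∧
          LinearIndependent (ZMod 2) ((↑) : B → (Sym2 (Fin N) → ZMod 2)) ∧
          Submodule.span (ZMod 2) (B : Set (Sym2 (Fin N) → ZMod 2)) = cycleSpace Ghat ∧
          (∀ e ∈ Ghat.edgeSet, (B.filter fun x => x e = 1).card ≤ 4) := by
  refine ⟨2, two_pos, fun n G hG _ => ?_⟩
  have := hG.nonempty
  exact ⟨_, by simpa using card_add_ncard_edgeSet_add_one_le G,
    exists_local_sparse_cycle_basis_supergraph_general G⟩
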